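/- arXiv:1009.0094 — 2 statements merged into one kernel-verified Lean document; each statement's English description precedes it below -/
import Mathlib

section
/- Let H and K be complex Hilbert spaces, let M ⊆ B(H) and N ⊆ B(K) be von Neumann algebras, and let Φ : M → N be a *-isomorphism. Suppose that (E_i)_{i∈I} is a net of orthogonal projections in M indexed by a directed set I which is increasing (E_i E_j = E_j = E_j E_i whenever j ≤ i), such that D := ⋃_{i∈I} E_i(H) is dense in H; that W is a closed densely defined (possibly unbounded) linear operator on H whose domain contains D and such that for every i ∈ I the operator W E_i is a bounded self-adjoint operator belonging to M; and that D' := ⋃_{i∈I} Φ(E_i)(K) is dense in K. Then the assignment B(k) := Φ(W E_i)(k) for k ∈ Φ(E_i)(K) gives a well-defined linear operator B with domain D' (independent of the choice of i), the operator B is closable, and the closure of B is a self-adjoint operator on K. -/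
theorem aux_main {K : Type} [NormedAddCommGroup K] [InnerProductSpace ℂ K] [CompleteSpace K]
    {I : Type} [Preorder I] [IsDirected I (· ≤ ·)] [Nonempty I]
    (p a : I → K →L[ℂ] K)
    (hpsa : ∀ i, IsSelfAdjoint (p i)) (hpp : ∀ i, p i * p i = p i)
    (hmono : ∀ i j, j ≤ i → p i * p j = p j)
    (hasa : ∀ i, IsSelfAdjoint (a i))
    (hap : ∀ i j, j ≤ i → a i * p j = a j)
    (hD : Dense (⋃ i, Set.range (p i) : Set K)) :
    ∃ B : K →ₗ.[ℂ] K,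
      (B.domain : Set K) = (⋃ i, Set.range (p i)) ∧
      (∀ (i : I) (k : B.domain), (k : K) ∈ Set.range (p i) → B k = a i (k : K)) ∧
      B.IsClosable ∧ IsSelfAdjoint B.closure := by
  have hpi : ∀ i j x, j ≤ i → p i (p j x) = p j x := fun i j x h =>
    DFunLike.congr_fun (hmono i j h) x
  have hai : ∀ i j x, j ≤ i → a i (p j x) = a j x := fun i j x h =>
    DFunLike.congr_fun (hap i j h) x
  have hr : ∀ i x, x ∈ Set.range (p i) ↔ p i x = x := by
    intro i x
    constructor
    · rintro ⟨y, rfl⟩; exact hpi i i y le_rfl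
    · intro h; exact ⟨x, h⟩
  have hup : ∀ i j x, j ≤ i → p j x = x → p i x = x := by
    intro i j x h hx
    rw [← hx]; exact hpi i j x h
  have haa : ∀ i j x, p i x = x → p j x = x → a i x = a j x := by
    intro i j x hi hj
    obtain ⟨l, hl, hl'⟩ := exists_ge_ge i j
    have h1 := hai l i x hl
    have h2 := hai l j x hl'
    rw [hi] at h1
    rw [hj] at h2
    rw [← h1, ← h2]
  have hps : ∀ i x y, inner ℂ (p i x) y = inner ℂ x (p i y) := fun i x y =>
    (hpsa i).isSymmetric x y
  have has : ∀ i x y, inner ℂ (a i x) y = inner ℂ x (a i y) := fun i x y =>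
    (hasa i).isSymmetric x y
  let S : Submodule ℂ K :=
    { carrier := {x | ∃ i, p i x = x}
      zero_mem' := ⟨Classical.arbitrary I, map_zero _⟩
      add_mem' := by
        rintro x y ⟨i, hi⟩ ⟨j, hj⟩
        obtain ⟨l, hl, hl'⟩ := exists_ge_ge i j
        exact ⟨l, by rw [map_add, hup l i x hl hi, hup l j y hl' hj]⟩
      smul_mem' := by
        rintro c x ⟨i, hi⟩
        exact ⟨i, by rw [map_smul, hi]⟩ }
  have hS : ∀ x : S, ∃ i, p i (x : K) = x := fun x => x.2
  choose f hf using hS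
  let B : K →ₗ.[ℂ] K :=
    { domain := S
      toFun :=
        { toFun := fun x => a (f x) (x : K)
          map_add' := by
            intro x y
            obtain ⟨l, hl, hl'⟩ := exists_ge_ge (f x) (f y)
            have hx := hup l _ _ hl (hf x)
            have hy := hup l _ _ hl' (hf y)
            have hxy : p l ((x + y : S) : K) = (x + y : S) := by
              rw [Submodule.coe_add, map_add, hx, hy]
            rw [haa _ l _ (hf (x + y)) hxy, haa _ l _ (hf x) hx, haa _ l _ (hf y) hy,
              Submodule.coe_add, map_add]
          map_smul' := by
            intro c x
            have hxy : p (f x) ((c • x : S) : K) = (c • x : S) := by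
              rw [Submodule.coe_smul, map_smul, hf x]
            rw [haa _ (f x) _ (hf (c • x)) hxy, Submodule.coe_smul, map_smul]
            rfl } }
  have hBS : B.domain = S := rfl
  have hBa : ∀ (i : I) (k : B.domain), p i (k : K) = k → B k = a i (k : K) := fun i k hk =>
    haa _ i _ (hf k) hk
  have hdom : (B.domain : Set K) = ⋃ i, Set.range (p i) := by
    ext x
    rw [Set.mem_iUnion]
    constructor
    · rintro ⟨i, hi⟩; exact ⟨i, (hr i x).2 hi⟩
    · rintro ⟨i, hi⟩; exact ⟨i, (hr i x).1 hi⟩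
  have hBd : Dense (B.domain : Set K) := hdom ▸ hD
  have hsymm : B.IsFormalAdjoint B := by
    intro x y
    obtain ⟨l, hl, hl'⟩ := exists_ge_ge (f x) (f y)
    rw [hBa l x (hup l _ _ hl (hf x)), hBa l y (hup l _ _ hl' (hf y)), has]
  have hle : B ≤ B.adjoint := hsymm.le_adjoint hBd
  have hclos : B.IsClosable := (LinearPMap.adjoint_isClosed hBd).isClosable.leIsClosable hle
  refine ⟨B, hdom, fun i k hk => hBa i k ((hr i k).1 hk), hclos, ?_⟩
  have hgc := hclos.graph_closure_eq_closure_graph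
  have hBcd : Dense (B.closure.domain : Set K) := hBd.mono B.le_closure.1
  have hnorm : ∀ i x, ‖p i x‖ ≤ ‖x‖ := by
    intro i x
    have h1 : ‖p i x‖ ^ 2 ≤ ‖x‖ * ‖p i x‖ := by
      have h2 : inner ℂ (p i x) (p i x) = inner ℂ x (p i x) := by
        rw [hps, hpi i i x le_rfl]
      calc ‖p i x‖ ^ 2 = ‖inner ℂ (p i x) (p i x)‖ := by
            rw [inner_self_eq_norm_sq_to_K]; simp
        _ ≤ _ := by rw [h2]; exact norm_inner_le_norm _ _
    by_contra! h
    nlinarith [norm_nonneg x]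
  have happ : ∀ x, ∀ ε > 0, ∃ j, ∀ i, j ≤ i → dist x (p i x) < ε := by
    intro x ε hε
    obtain ⟨d, hd, hxd⟩ := Metric.dense_iff.1 hD x (ε / 2) (by positivity)
    obtain ⟨j, hj⟩ := Set.mem_iUnion.1 hxd
    refine ⟨j, fun i hi => ?_⟩
    have hpd := hup i j d hi ((hr j d).1 hj)
    have h1 : x - p i x = (x - d) - p i (x - d) := by
      rw [map_sub, hpd]; abel
    rw [Metric.mem_ball, dist_comm, dist_eq_norm] at hd
    rw [dist_eq_norm, h1]
    calc _ ≤ ‖x - d‖ + ‖p i (x - d)‖ := norm_sub_le _ _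
      _ ≤ ‖x - d‖ + ‖x - d‖ := by gcongr; exact hnorm _ _
      _ < ε := by linarith
  rw [LinearPMap.isSelfAdjoint_def]
  apply LinearPMap.eq_of_eq_graph
  rw [LinearPMap.adjoint_graph_eq_graph_adjoint hBcd, ← hgc]
  ext ⟨y, z⟩
  rw [Submodule.mem_adjoint_iff]
  constructor
  · intro h
    change (y, z) ∈ closure (B.graph : Set (K × K))
    rw [Metric.mem_closure_iff]
    intro ε hε
    obtain ⟨j, hj⟩ := happ y ε hε
    obtain ⟨j', hj'⟩ := happ z ε hε
    obtain ⟨i, hi, hi'⟩ := exists_ge_ge j j'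
    refine ⟨(p i y, p i z), ?_, ?_⟩
    · have key : a i y = p i z := by
        refine ext_inner_left ℂ fun x => ?_
        have hm : p i x ∈ B.domain := ⟨i, hpi i i x le_rfl⟩
        have h3 := h (p i x) (a i x) (subset_closure (by
          have := B.mem_graph ⟨p i x, hm⟩
          rwa [hBa i ⟨p i x, hm⟩ (hpi i i x le_rfl), hai i i x le_rfl] at this))
        rw [sub_eq_zero] at h3
        rw [← has, ← hps]; exact h3
      have hm : p i y ∈ B.domain := ⟨i, hpi i i y le_rfl⟩
      have := B.mem_graph ⟨p i y, hm⟩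
      rwa [hBa i ⟨p i y, hm⟩ (hpi i i y le_rfl), hai i i y le_rfl, key] at this
    · rw [Prod.dist_eq]
      exact max_lt (hj i hi) (hj' i hi')
  · intro h u v huv
    have hcl1 : ∀ u v : K, (u, v) ∈ B.graph → ∀ q ∈ closure (B.graph : Set (K × K)),
        inner ℂ v q.1 - inner ℂ u q.2 = 0 := by
      intro u v huv q hq
      have hc : IsClosed {q : K × K | inner ℂ v q.1 - inner ℂ u q.2 = 0} :=
        isClosed_eq (by fun_prop) continuous_const
      refine closure_minimal ?_ hc hq
      rintro ⟨s, t⟩ hst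
      obtain ⟨x, hx1, hx2⟩ := (B.mem_graph_iff).1 huv
      obtain ⟨w, hw1, hw2⟩ := (B.mem_graph_iff).1 hst
      have := hsymm x w
      simp only at hx1 hx2 hw1 hw2
      rw [hx1, hx2, hw1, hw2] at this
      exact sub_eq_zero.2 this
    have hc : IsClosed {q : K × K | inner ℂ q.2 y - inner ℂ q.1 z = 0} :=
      isClosed_eq (by fun_prop) continuous_const
    refine closure_minimal (t := {q : K × K | inner ℂ q.2 y - inner ℂ q.1 z = 0}) ?_ hc huv
    rintro ⟨s, t⟩ hst
    exact hcl1 s t hst _ h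

/-- Lemma on extending a `*`-isomorphism to certain unbounded operators.
Let `M ⊆ B(H)` and `N ⊆ B(K)` be von Neumann algebras and `Φ : M → N` a `*`-isomorphism.
Given an increasing net `(E i)` of orthogonal projections in `M` whose ranges have dense union,
and a closed densely defined operator `W` on `H` whose domain contains all the ranges of the
`E i` and such that each `W ∘ E i` is (given by) a bounded self-adjoint operator `A i ∈ M`,
and such that the union of the ranges of the `Φ (E i)` is dense in `K`, the assignment
`B k := Φ (W E i) k` for `k ∈ range (Φ (E i))` gives a well-defined linear operator with
domain `⋃ i, range (Φ (E i))`, which is closable with self-adjoint closure. -/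
theorem statement0
    {H K : Type} [NormedAddCommGroup H] [InnerProductSpace ℂ H] [CompleteSpace H]
    [NormedAddCommGroup K] [InnerProductSpace ℂ K] [CompleteSpace K]
    (M : VonNeumannAlgebra H) (N : VonNeumannAlgebra K)
    (Φ : M.toStarSubalgebra ≃⋆ₐ[ℂ] N.toStarSubalgebra)
    {I : Type} [Preorder I] [IsDirected I (· ≤ ·)] [Nonempty I]
    (E : I → H →L[ℂ] H) (hEmem : ∀ i, E i ∈ M.toStarSubalgebra)
    (hEsa : ∀ i, IsSelfAdjoint (E i)) (hEidem : ∀ i, E i * E i = E i)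
    (hEmono : ∀ i j, j ≤ i → E i * E j = E j ∧ E j * E i = E j)
    (hD : Dense (⋃ i, Set.range (E i) : Set H))
    (W : H →ₗ.[ℂ] H) (hWclosed : W.IsClosed) (hWdense : Dense (W.domain : Set H))
    (hWdom : ∀ (i : I) (x : H), E i x ∈ W.domain)
    (A : I → H →L[ℂ] H) (hAmem : ∀ i, A i ∈ M.toStarSubalgebra)
    (hAsa : ∀ i, IsSelfAdjoint (A i))
    (hAW : ∀ (i : I) (x : H), A i x = W ⟨E i x, hWdom i x⟩)
    (hD' : Dense (⋃ i,
      Set.range ((Φ ⟨E i, hEmem i⟩ : N.toStarSubalgebra) : K →L[ℂ] K) : Set K)) :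
    ∃ B : K →ₗ.[ℂ] K,
      (B.domain : Set K)
          = (⋃ i, Set.range ((Φ ⟨E i, hEmem i⟩ : N.toStarSubalgebra) : K →L[ℂ] K)) ∧
      (∀ (i : I) (k : B.domain),
        (k : K) ∈ Set.range ((Φ ⟨E i, hEmem i⟩ : N.toStarSubalgebra) : K →L[ℂ] K) →
        B k = ((Φ ⟨A i, hAmem i⟩ : N.toStarSubalgebra) : K →L[ℂ] K) (k : K)) ∧
      B.IsClosable ∧ IsSelfAdjoint B.closure := by
  refine aux_main (fun i => ((Φ ⟨E i, hEmem i⟩ : N.toStarSubalgebra) : K →L[ℂ] K))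
    (fun i => ((Φ ⟨A i, hAmem i⟩ : N.toStarSubalgebra) : K →L[ℂ] K)) ?_ ?_ ?_ ?_ ?_ hD'
  · intro i
    have h : IsSelfAdjoint (⟨E i, hEmem i⟩ : M.toStarSubalgebra) := Subtype.ext (hEsa i)
    exact congrArg Subtype.val (h.map Φ)
  · intro i
    have h : (⟨E i, hEmem i⟩ : M.toStarSubalgebra) * ⟨E i, hEmem i⟩ = ⟨E i, hEmem i⟩ :=
      Subtype.ext (hEidem i)
    have := congrArg Φ h
    rw [map_mul] at this
    exact congrArg Subtype.val this
  · intro i j hij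
    have h : (⟨E i, hEmem i⟩ : M.toStarSubalgebra) * ⟨E j, hEmem j⟩ = ⟨E j, hEmem j⟩ :=
      Subtype.ext (hEmono i j hij).1
    have := congrArg Φ h
    rw [map_mul] at this
    exact congrArg Subtype.val this
  · intro i
    have h : IsSelfAdjoint (⟨A i, hAmem i⟩ : M.toStarSubalgebra) := Subtype.ext (hAsa i)
    exact congrArg Subtype.val (h.map Φ)
  · intro i j hij
    have h : (⟨A i, hAmem i⟩ : M.toStarSubalgebra) * ⟨E j, hEmem j⟩ = ⟨A j, hAmem j⟩ := by
      refine Subtype.ext (ContinuousLinearMap.ext fun x => ?_)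
      change A i (E j x) = A j x
      rw [hAW, hAW]
      congr 1
      exact Subtype.ext (DFunLike.congr_fun (hEmono i j hij).1 x)
    have := congrArg Φ h
    rw [map_mul] at this
    exact congrArg Subtype.val this
end

section
/- Let H and K be complex Hilbert spaces, M ⊆ B(H) and N ⊆ B(K) von Neumann algebras, Φ : M → N a *-isomorphism, and (E_i)_{i∈I} an increasing net of orthogonal projections in M (E_i E_j = E_j whenever j ≤ i) such that ⋃_{i∈I} E_i(H) is dense in H and ⋃_{i∈I} Φ(E_i)(K) is dense in K. Suppose W is a bounded operator defined on all of H such that W E_i is a bounded self-adjoint operator belonging to M for every i ∈ I. Then W belongs to M, and for every k ∈ Φ(E_i)(K) one has Φ(W E_i)(k) = Φ(W)(k); consequently the closable operator B defined on ⋃_{i∈I} Φ(E_i)(K) by B(k) := Φ(W E_i)(k) for k ∈ Φ(E_i)(K) has closure equal to the bounded operator Φ(W). -/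
/-- In the setting of the extension lemma, if `W` is a bounded operator
defined on all of `H` with each `W * E i` a bounded self-adjoint member of `M`, then `W ∈ M`,
`Φ (W * E i) k = Φ (W) k` for every `k` in the range of `Φ (E i)`, and consequently any
operator `B` with domain `⋃ i, range (Φ (E i))` given by `B k = Φ (W * E i) k` on the range of
`Φ (E i)` is closable with closure the bounded operator `Φ (W)`. -/
theorem statement1
    {H K : Type} [NormedAddCommGroup H] [InnerProductSpace ℂ H] [CompleteSpace H]
    [NormedAddCommGroup K] [InnerProductSpace ℂ K] [CompleteSpace K]
    (M : VonNeumannAlgebra H) (N : VonNeumannAlgebra K)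
    (Φ : M.toStarSubalgebra ≃⋆ₐ[ℂ] N.toStarSubalgebra)
    {I : Type} [Preorder I] [IsDirected I (· ≤ ·)] [Nonempty I]
    (E : I → H →L[ℂ] H) (hEmem : ∀ i, E i ∈ M.toStarSubalgebra)
    (hEsa : ∀ i, IsSelfAdjoint (E i)) (hEidem : ∀ i, E i * E i = E i)
    (hEmono : ∀ i j, j ≤ i → E i * E j = E j ∧ E j * E i = E j)
    (hD : Dense (⋃ i, Set.range (E i) : Set H))
    (hD' : Dense (⋃ i,
      Set.range ((Φ ⟨E i, hEmem i⟩ : N.toStarSubalgebra) : K →L[ℂ] K) : Set K))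
    (W : H →L[ℂ] H)
    (hWE : ∀ i, W * E i ∈ M.toStarSubalgebra)
    (hWEsa : ∀ i, IsSelfAdjoint (W * E i)) :
    ∃ hW : W ∈ M.toStarSubalgebra,
      (∀ (i : I) (k : K),
        k ∈ Set.range ((Φ ⟨E i, hEmem i⟩ : N.toStarSubalgebra) : K →L[ℂ] K) →
        ((Φ ⟨W * E i, hWE i⟩ : N.toStarSubalgebra) : K →L[ℂ] K) k
          = ((Φ ⟨W, hW⟩ : N.toStarSubalgebra) : K →L[ℂ] K) k) ∧
      (∀ B : K →ₗ.[ℂ] K,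
        (B.domain : Set K)
            = (⋃ i, Set.range ((Φ ⟨E i, hEmem i⟩ : N.toStarSubalgebra) : K →L[ℂ] K)) →
        (∀ (i : I) (k : B.domain),
          (k : K) ∈ Set.range ((Φ ⟨E i, hEmem i⟩ : N.toStarSubalgebra) : K →L[ℂ] K) →
          B k = ((Φ ⟨W * E i, hWE i⟩ : N.toStarSubalgebra) : K →L[ℂ] K) (k : K)) →
        B.IsClosable ∧
          B.closure
            = (((Φ ⟨W, hW⟩ : N.toStarSubalgebra) : K →L[ℂ] K) : K →ₗ[ℂ] K).toPMap ⊤) := by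
  have hW : W ∈ M.toStarSubalgebra := by
    have h2 : W ∈ Set.centralizer (Set.centralizer (M : Set (H →L[ℂ] H))) := by
      intro T hT
      have hfun : (⇑(T * W) : H → H) = ⇑(W * T) := by
        refine Continuous.ext_on hD (T * W).continuous (W * T).continuous ?_
        intro x hx
        obtain ⟨i, y, rfl⟩ := Set.mem_iUnion.1 hx
        have h1 := hT (W * E i) (hWE i)
        have h3 := hT (E i) (hEmem i)
        have h4 : (T * W) * E i = (W * T) * E i := by
          rw [mul_assoc, ← h1, mul_assoc, h3, mul_assoc]
        exact congrArg (fun A : H →L[ℂ] H => A y) h4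
      exact DFunLike.coe_injective hfun
    rw [VonNeumannAlgebra.centralizer_centralizer] at h2
    exact h2
  have key : ∀ (i : I) (k : K),
        k ∈ Set.range ((Φ ⟨E i, hEmem i⟩ : N.toStarSubalgebra) : K →L[ℂ] K) →
        ((Φ ⟨W * E i, hWE i⟩ : N.toStarSubalgebra) : K →L[ℂ] K) k
          = ((Φ ⟨W, hW⟩ : N.toStarSubalgebra) : K →L[ℂ] K) k := by
    rintro i _ ⟨y, rfl⟩
    have h1 : Φ ⟨W * E i, hWE i⟩ * Φ ⟨E i, hEmem i⟩ = Φ ⟨W, hW⟩ * Φ ⟨E i, hEmem i⟩ := by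
      rw [← map_mul, ← map_mul]
      congr 1
      apply Subtype.ext
      change W * E i * E i = W * E i
      rw [mul_assoc, hEidem]
    exact congrArg (fun A : N.toStarSubalgebra => (A : K →L[ℂ] K) y) h1
  refine ⟨hW, key, ?_⟩
  intro B hdom hB
  generalize ((Φ ⟨W, hW⟩ : N.toStarSubalgebra) : K →L[ℂ] K) = V at key ⊢
  rw [← hdom] at hD'
  have hBV : ∀ k : B.domain, B k = V k := by
    intro k
    have hk : (k : K) ∈ (B.domain : Set K) := k.2
    rw [hdom] at hk
    obtain ⟨i, hi⟩ := Set.mem_iUnion.1 hk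
    rw [hB i k hi, key i k hi]
  have hg : B.graph.topologicalClosure = ((V : K →ₗ[ℂ] K).toPMap ⊤).graph := by
    apply le_antisymm
    · intro p hp
      have hcl : IsClosed {p : K × K | V p.1 = p.2} :=
        isClosed_eq (V.continuous.comp continuous_fst) continuous_snd
      have hsub : (B.graph : Set (K × K)) ⊆ {p : K × K | V p.1 = p.2} := by
        intro q hq
        obtain ⟨y, h1, h2⟩ := (LinearPMap.mem_graph_iff B).1 hq
        change V q.1 = q.2
        rw [← h1, ← h2, hBV]
      have hp' : V p.1 = p.2 := closure_minimal hsub hcl hp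
      exact (LinearPMap.mem_graph_iff _).2 ⟨⟨p.1, trivial⟩, rfl, hp'⟩
    · intro p hp
      obtain ⟨y, h1, h2⟩ := (LinearPMap.mem_graph_iff _).1 hp
      have h2' : V y = p.2 := h2
      have hpe : p = (p.1, V p.1) := by rw [← h1, h2', h1]
      have hc : Continuous (fun k : K => (k, V k)) := continuous_id.prodMk V.continuous
      have hm : (p.1, V p.1) ∈ closure (B.graph : Set (K × K)) := by
        refine map_mem_closure (f := fun k : K => (k, V k)) hc (hD' p.1) ?_
        intro k hk
        exact (LinearPMap.mem_graph_iff _).2 ⟨⟨k, hk⟩, rfl, hBV ⟨k, hk⟩⟩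
      rw [hpe]
      exact hm
  have hcl : B.IsClosable := ⟨_, hg⟩
  refine ⟨hcl, LinearPMap.eq_of_eq_graph ?_⟩
  rw [← hcl.graph_closure_eq_closure_graph, hg]
end
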